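/- Let M_1, …, M_k be matroids on pairwise disjoint ground sets and let S be a matroid polytope subdivision of the matroid polytope Q(M_1 ⊕ ⋯ ⊕ M_k) of their direct sum. Then, under the identification Q(M_1 ⊕ ⋯ ⊕ M_k) ≅ Q(M_1) × ⋯ × Q(M_k), one has S = S_1 × ⋯ × S_k, where each S_i is a subdivision of Q(M_i). -/

import Mathlib

section GenericPolytopes

variable {V : Type*} [AddCommGroup V] [Module ℝ V]

/-- A polytope in a real vector space `V`: the convex hull of a finite set of points. -/
def IsPolytope (P : Set V) : Prop := ∃ t : Finset V, P = convexHull ℝ ↑t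

/-- The face of a set `Q ⊆ V` maximizing the linear functional `φ`. -/
def faceL (φ : V →ₗ[ℝ] ℝ) (Q : Set V) : Set V := {x ∈ Q | ∀ y ∈ Q, φ y ≤ φ x}

/-- `F` is a face of `Q` if it is the maximizing set of some linear functional on `Q`.
(Taking `φ = 0` shows `Q` is a face of itself.) -/
def IsFaceOf (Q F : Set V) : Prop := ∃ φ : V →ₗ[ℝ] ℝ, F = faceL φ Q

/-- The dimension of a subset of `V`: the dimension of its affine hull. -/
noncomputable def pdim (P : Set V) : ℕ := Module.finrank ℝ (vectorSpan ℝ P)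

/-- `S` is a subdivision of the polytope `Q`: a finite collection of polytopes of the same
dimension as `Q` whose vertices are vertices of `Q`, whose union is `Q`, and in which any
two distinct cells meet (if at all) in a proper face of both. -/
structure IsSubdivision (S : Finset (Set V)) (Q : Set V) : Prop where
  poly : ∀ P ∈ S, IsPolytope P
  dim_eq : ∀ P ∈ S, pdim P = pdim Q
  vertices_subset : ∀ P ∈ S, Set.extremePoints ℝ P ⊆ Set.extremePoints ℝ Q
  cover : ⋃₀ ↑S = Q
  inter_face : ∀ P ∈ S, ∀ P' ∈ S, P ≠ P' → (P ∩ P').Nonempty →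
    IsFaceOf P (P ∩ P') ∧ P ∩ P' ≠ P ∧ IsFaceOf P' (P ∩ P') ∧ P ∩ P' ≠ P'

/-- A face of a subdivision `S` is a face of one of its cells. -/
def IsFaceOfSubdivision (S : Finset (Set V)) (F : Set V) : Prop := ∃ P ∈ S, IsFaceOf P F

/-- An edge of a subdivision: a one-dimensional face of one of its cells. -/
def IsEdgeOfSubdivision (S : Finset (Set V)) (F : Set V) : Prop :=
  IsFaceOfSubdivision S F ∧ pdim F = 1

end GenericPolytopes

/-- The matroid polytope `Q(M)` of a matroid `M` on a finite type `β`: the convex hull of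
the indicator vectors of the bases of `M`. -/
noncomputable def mPolyG {β : Type*} [Fintype β] [DecidableEq β] (M : Matroid β) :
    Set (β → ℝ) :=
  convexHull ℝ {x | ∃ B : Finset β, M.IsBase ↑B ∧ x = fun a => if a ∈ B then (1 : ℝ) else 0}

section FacesAndProducts

open Set

/-- A nonempty polytope has a point that lies in no proper face. -/
lemma IsPolytope.exists_mem_forall_face_eq {V : Type*} [AddCommGroup V] [Module ℝ V]
    {P : Set V} (hP : IsPolytope P) (hne : P.Nonempty) :
    ∃ x ∈ P, ∀ F, IsFaceOf P F → x ∈ F → F = P := by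
  obtain ⟨t, rfl⟩ := hP
  have ht : t.Nonempty := by simpa using hne
  have hc : (t.card : ℝ) ≠ 0 := by exact_mod_cast ht.card_pos.ne'
  have hsum : ∑ _i ∈ t, (t.card : ℝ)⁻¹ = 1 := by simp [hc]
  refine ⟨∑ v ∈ t, (t.card : ℝ)⁻¹ • v, ?_, ?_⟩
  · exact (convex_convexHull ℝ _).sum_mem (fun _ _ => by positivity) hsum
      (fun v hv => subset_convexHull ℝ _ hv)
  rintro _ ⟨φ, rfl⟩ ⟨-, hmax⟩
  set x := ∑ v ∈ t, (t.card : ℝ)⁻¹ • v with hx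
  have hφx : ∑ v ∈ t, (t.card : ℝ)⁻¹ * (φ x - φ v) = 0 := by
    simp_rw [mul_sub, Finset.sum_sub_distrib, ← Finset.sum_mul, hsum]
    simp [hx]
  have hle : ∀ v ∈ t, φ v ≤ φ x := fun v hv => hmax v (subset_convexHull ℝ _ hv)
  have heq : ∀ v ∈ t, φ v = φ x := by
    intro v hv
    have h0 := (Finset.sum_eq_zero_iff_of_nonneg (fun w hw =>
      mul_nonneg (by positivity) (sub_nonneg.2 (hle w hw)))).1 hφx v hv
    rcases mul_eq_zero.1 h0 with h | h
    · exact absurd h (inv_ne_zero hc)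
    · linarith
  have hconst : ∀ y ∈ convexHull ℝ (t : Set V), φ y = φ x := fun y hy =>
    convexHull_min (t := {y | φ y = φ x}) (fun v hv => heq v hv)
      (convex_hyperplane φ.isLinear (φ x)) hy
  ext y
  exact ⟨fun h => h.1, fun h => ⟨h, fun z hz => by rw [hconst z hz, hconst y h]⟩⟩

/-- A nonempty face whose direction is that of the whole set is the whole set. -/
lemma IsFaceOf.eq_of_vectorSpan_eq {V : Type*} [AddCommGroup V] [Module ℝ V]
    {P F : Set V} (hF : IsFaceOf P F) (hne : F.Nonempty)
    (hspan : vectorSpan ℝ F = vectorSpan ℝ P) : F = P := by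
  obtain ⟨φ, rfl⟩ := hF
  obtain ⟨x, hx⟩ := hne
  have hker : vectorSpan ℝ (faceL φ P) ≤ LinearMap.ker φ := by
    refine Submodule.span_le.2 ?_
    rintro _ ⟨a, ha, b, hb, rfl⟩
    have hab : φ a = φ b := le_antisymm (hb.2 a ha.1) (ha.2 b hb.1)
    simp [hab]
  refine Subset.antisymm (fun y hy => hy.1) fun y hy => ⟨hy, fun z hz => ?_⟩
  have hyx : φ (y - x) = 0 := hker (hspan ▸ vsub_mem_vectorSpan ℝ hy hx.1)
  rw [map_sub] at hyx
  linarith [hx.2 z hz]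

lemma IsPolytope.image {V W : Type*} [AddCommGroup V] [Module ℝ V] [AddCommGroup W] [Module ℝ W]
    {P : Set V} (hP : IsPolytope P) (f : V →ₗ[ℝ] W) : IsPolytope (f '' P) := by
  classical
  obtain ⟨t, rfl⟩ := hP
  exact ⟨t.image f, by rw [f.image_convexHull, Finset.coe_image]⟩

lemma IsPolytope.isCompact {V : Type*} [NormedAddCommGroup V] [NormedSpace ℝ V]
    {P : Set V} (hP : IsPolytope P) : IsCompact P := by
  obtain ⟨t, rfl⟩ := hP
  exact t.finite_toSet.isCompact_convexHull ℝ

variable {ι : Type*} {E : ι → Type*}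

/-- If two products of sets meet in a face of the first one, so do their factors. -/
lemma IsFaceOf.inter_of_pi [DecidableEq ι] [∀ i, AddCommGroup (E i)] [∀ i, Module ℝ (E i)]
    {A B : ∀ i, Set (E i)}
    (h : IsFaceOf (univ.pi A) (univ.pi A ∩ univ.pi B)) (hne : (univ.pi A ∩ univ.pi B).Nonempty)
    (i : ι) : IsFaceOf (A i) (A i ∩ B i) := by
  obtain ⟨φ, hφ⟩ := h
  obtain ⟨z, hz⟩ := hne
  have hupd : ∀ x, φ (Function.update z i x)
      = φ (Function.update z i 0) + φ (LinearMap.single ℝ E i x) := by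
    intro x
    rw [← map_add]
    congr 1
    ext j
    by_cases hj : j = i
    · subst hj; simp
    · simp [hj]
  have hmem : ∀ {C : ∀ i, Set (E i)}, z ∈ univ.pi C → ∀ {x}, x ∈ C i →
      Function.update z i x ∈ univ.pi C := by
    intro C hC x hx j _
    by_cases hj : j = i
    · subst hj; simpa
    · simpa [hj] using hC j trivial
  have hzi : Function.update z i (z i) = z := Function.update_eq_self i z
  refine ⟨φ ∘ₗ LinearMap.single ℝ E i, Subset.antisymm ?_ ?_⟩
  · rintro x ⟨hxA, hxB⟩
    refine ⟨hxA, fun y hy => ?_⟩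
    have hx : Function.update z i x ∈ faceL φ (univ.pi A) :=
      hφ ▸ ⟨hmem hz.1 hxA, hmem hz.2 hxB⟩
    have := hx.2 _ (hmem hz.1 hy)
    rw [hupd, hupd x] at this
    simpa using this
  · rintro x ⟨hxA, hx⟩
    have hzmax : z ∈ faceL φ (univ.pi A) := hφ ▸ hz
    have hle : φ z ≤ φ (Function.update z i x) := by
      rw [← hzi, Function.update_idem, hupd, hupd x]
      simpa using hx (z i) (hz.1 i trivial)
    have hxmem : Function.update z i x ∈ univ.pi A ∩ univ.pi B := by
      rw [hφ]
      exact ⟨hmem hz.1 hxA, fun y hy => (hzmax.2 y hy).trans hle⟩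
    exact ⟨hxA, by simpa using hxmem.2 i trivial⟩

lemma extremePoints_subset_of_pi [DecidableEq ι] [∀ i, AddCommGroup (E i)]
    [∀ i, Module ℝ (E i)] {A B : ∀ i, Set (E i)}
    (hne : (extremePoints ℝ (univ.pi A)).Nonempty)
    (h : extremePoints ℝ (univ.pi A) ⊆ extremePoints ℝ (univ.pi B)) (i : ι) :
    extremePoints ℝ (A i) ⊆ extremePoints ℝ (B i) := by
  obtain ⟨z, hz⟩ := hne
  rw [extremePoints_pi, extremePoints_pi] at h
  rw [extremePoints_pi] at hz
  intro x hx
  have hmem : Function.update z i x ∈ univ.pi fun i => extremePoints ℝ (A i) := by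
    intro j _
    by_cases hj : j = i
    · subst hj; simpa
    · simpa [hj] using hz j trivial
  simpa using h hmem i trivial

/-- Cells of a subdivision that meet do so in a (not necessarily proper) face of each. -/
lemma IsSubdivision.isFaceOf_inter {V : Type*} [AddCommGroup V] [Module ℝ V]
    {S : Finset (Set V)} {Q : Set V} (hS : IsSubdivision S Q) {P P' : Set V}
    (hP : P ∈ S) (hP' : P' ∈ S) (hne : (P ∩ P').Nonempty) : IsFaceOf P (P ∩ P') := by
  by_cases h : P = P'
  · subst h
    refine ⟨0, ?_⟩
    ext x
    simp [faceL]
  · exact (hS.inter_face P hP P' hP' h hne).1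

lemma IsSubdivision.subset {V : Type*} [AddCommGroup V] [Module ℝ V]
    {S : Finset (Set V)} {Q : Set V} (hS : IsSubdivision S Q) {P : Set V}
    (hP : P ∈ S) : P ⊆ Q := by
  rw [← hS.cover]
  exact subset_sUnion_of_mem hP

lemma IsSubdivision.vectorSpan_eq {V : Type*} [AddCommGroup V] [Module ℝ V]
    [FiniteDimensional ℝ V] {S : Finset (Set V)} {Q : Set V} (hS : IsSubdivision S Q) {P : Set V}
    (hP : P ∈ S) : vectorSpan ℝ P = vectorSpan ℝ Q :=
  Submodule.eq_of_le_of_finrank_eq (vectorSpan_mono ℝ (hS.subset hP)) (hS.dim_eq P hP)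

lemma vectorSpan_eval_image_eq [∀ i, AddCommGroup (E i)] [∀ i, Module ℝ (E i)]
    {P R : Set (∀ i, E i)}
    (h : vectorSpan ℝ P = vectorSpan ℝ R) (i : ι) :
    vectorSpan ℝ (Function.eval i '' P) = vectorSpan ℝ (Function.eval i '' R) := by
  have key : ∀ T : Set (∀ i, E i), vectorSpan ℝ (Function.eval i '' T)
      = (vectorSpan ℝ T).map (LinearMap.proj i : (∀ i, E i) →ₗ[ℝ] E i) := fun T =>
    (LinearMap.proj i : (∀ i, E i) →ₗ[ℝ] E i).toAffineMap.map_vectorSpan.symm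
  rw [key, key, h]

/-- If two product cells have a common point outside the `i`-th factor, then their `i`-th factors
meet, if at all, in a face. -/
lemma IsSubdivision.isFaceOf_eval_inter [∀ i, AddCommGroup (E i)]
    [∀ i, Module ℝ (E i)] {S : Finset (Set (∀ i, E i))} {Q : Set (∀ i, E i)} (hS : IsSubdivision S Q)
    (hpi : ∀ P ∈ S, P = univ.pi fun i => Function.eval i '' P)
    {P P' : Set (∀ i, E i)} (hP : P ∈ S) (hP' : P' ∈ S) {i : ι}
    {y : ∀ i, E i} (hy : ∀ j ≠ i, y j ∈ Function.eval j '' P)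
    (hy' : ∀ j ≠ i, y j ∈ Function.eval j '' P')
    (hne : (Function.eval i '' P ∩ Function.eval i '' P').Nonempty) :
    IsFaceOf (Function.eval i '' P) (Function.eval i '' P ∩ Function.eval i '' P') := by
  classical
  obtain ⟨x, hx, hx'⟩ := hne
  have hmem : ∀ R : Set (∀ i, E i), x ∈ Function.eval i '' R →
      (∀ j ≠ i, y j ∈ Function.eval j '' R) →
      Function.update y i x ∈ univ.pi fun i => Function.eval i '' R := by
    intro R hxR hyR j _
    by_cases hj : j = i
    · subst hj; simpa using hxR
    · simpa [hj] using hyR j hj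
  have hz := hmem P hx hy
  have hz' := hmem P' hx' hy'
  have h := hS.isFaceOf_inter hP hP' ⟨_, (hpi P hP).ge hz, (hpi P' hP').ge hz'⟩
  have h' : IsFaceOf (univ.pi fun i => Function.eval i '' P)
      ((univ.pi fun i => Function.eval i '' P) ∩ univ.pi fun i => Function.eval i '' P') := by
    rwa [← hpi P hP, ← hpi P' hP']
  exact h'.inter_of_pi ⟨_, hz, hz'⟩ i

/-- The projections to the `i`-th factor of the cells in `S`. -/
noncomputable def factorCells (S : Finset (Set (∀ i, E i))) (i : ι) : Finset (Set (E i)) := by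
  classical exact S.image (Function.eval i '' ·)

lemma mem_factorCells {S : Finset (Set (∀ i, E i))} {i : ι} {c : Set (E i)} :
    c ∈ factorCells S i ↔ ∃ P ∈ S, Function.eval i '' P = c := by
  simp [factorCells]

end FacesAndProducts

section ProductSubdivisions

open Set

variable {ι : Type*} [Fintype ι] {E : ι → Type*}
  [∀ i, NormedAddCommGroup (E i)] [∀ i, NormedSpace ℝ (E i)] [∀ i, FiniteDimensional ℝ (E i)]
  {S : Finset (Set (∀ i, E i))} {Q : ∀ i, Set (E i)}

/-- If two product cells have a common point outside the `i`-th factor, then their `i`-th factors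
agree as soon as they share a point that lies in no proper face of the first one. -/
lemma IsSubdivision.eval_image_eq (hS : IsSubdivision S (univ.pi Q))
    (hpi : ∀ P ∈ S, P = univ.pi fun i => Function.eval i '' P)
    {P P' : Set (∀ i, E i)} (hP : P ∈ S) (hP' : P' ∈ S) {i : ι} {x : E i}
    (hx : x ∈ Function.eval i '' P) (hx' : x ∈ Function.eval i '' P')
    (hface : ∀ F, IsFaceOf (Function.eval i '' P) F → x ∈ F → F = Function.eval i '' P)
    {y : ∀ i, E i} (hy : ∀ j ≠ i, y j ∈ Function.eval j '' P)
    (hy' : ∀ j ≠ i, y j ∈ Function.eval j '' P') :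
    Function.eval i '' P = Function.eval i '' P' := by
  have h1 := hface _ (hS.isFaceOf_eval_inter hpi hP hP' hy hy' ⟨x, hx, hx'⟩) ⟨hx, hx'⟩
  have h2 := hS.isFaceOf_eval_inter hpi hP' hP hy' hy ⟨x, hx', hx⟩
  rw [inter_comm, h1] at h2
  refine h2.eq_of_vectorSpan_eq ⟨x, hx⟩ (vectorSpan_eval_image_eq ?_ i)
  rw [hS.vectorSpan_eq hP, hS.vectorSpan_eq hP']

/-- Every cell of the `i`-th factor occurs over every point of the remaining factors. -/
lemma IsSubdivision.exists_cell_over (hS : IsSubdivision S (univ.pi Q))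
    (hpi : ∀ P ∈ S, P = univ.pi fun i => Function.eval i '' P)
    (hne : ∀ P ∈ S, P.Nonempty) (hQ : ∀ i, Convex ℝ (Q i))
    {i : ι} {c : Set (E i)} (hc : c ∈ factorCells S i) {y : ∀ i, E i} (hy : y ∈ univ.pi Q) :
    ∃ P ∈ S, Function.eval i '' P = c ∧ ∀ j ≠ i, y j ∈ Function.eval j '' P := by
  classical
  obtain ⟨P₀, hP₀, rfl⟩ := mem_factorCells.1 hc
  obtain ⟨x, hx, hface⟩ := ((hS.poly P₀ hP₀).image (LinearMap.proj i)).exists_mem_forall_face_eq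
    ((hne P₀ hP₀).image _)
  change x ∈ Function.eval i '' P₀ at hx
  change ∀ F, IsFaceOf (Function.eval i '' P₀) F → x ∈ F → F = Function.eval i '' P₀ at hface
  have hclosed : ∀ p : Set (∀ i, E i) → Prop,
      IsClosed {y : ∀ i, E i | ∃ P ∈ S, p P ∧ ∀ j ≠ i, y j ∈ Function.eval j '' P} := by
    intro p
    have heq : {y : ∀ i, E i | ∃ P ∈ S, p P ∧ ∀ j ≠ i, y j ∈ Function.eval j '' P}
        = ⋃ P ∈ S.filter p, ({i}ᶜ : Set ι).pi fun j => Function.eval j '' P := by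
      ext y
      simp [and_assoc, Set.mem_pi]
    rw [heq]
    refine isClosed_biUnion_finset fun P hP => isClosed_set_pi fun j _ => ?_
    exact (((hS.poly P (Finset.mem_filter.1 hP).1).image (LinearMap.proj j)).isCompact).isClosed
  by_contra hcon
  have hcov : ∀ z ∈ univ.pi Q, ∃ P ∈ S, x ∈ Function.eval i '' P ∧
      ∀ j ≠ i, z j ∈ Function.eval j '' P := by
    intro z hz
    have hmem : Function.update z i x ∈ univ.pi Q := by
      intro j _
      by_cases hj : j = i
      · subst hj
        obtain ⟨w, hw, rfl⟩ := hx
        simpa using hS.subset hP₀ hw j trivial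
      · simpa [hj] using hz j trivial
    rw [← hS.cover] at hmem
    obtain ⟨P, hP, hzP⟩ := hmem
    refine ⟨P, hP, ⟨_, hzP, by simp⟩, fun j hj => ⟨_, hzP, by simp [hj]⟩⟩
  obtain ⟨z, -, ⟨P, hP, hPc, hPz⟩, ⟨P', hP', ⟨hPc', hxP'⟩, hPz'⟩⟩ :=
    isPreconnected_closed_iff.1 (convex_pi fun i _ => hQ i).isPreconnected _ _
      (hclosed fun P => Function.eval i '' P = Function.eval i '' P₀)
      (hclosed fun P => Function.eval i '' P ≠ Function.eval i '' P₀ ∧ x ∈ Function.eval i '' P)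
      (fun z hz => by
        obtain ⟨P, hP, hxP, hPz⟩ := hcov z hz
        by_cases h : Function.eval i '' P = Function.eval i '' P₀
        · exact Or.inl ⟨P, hP, h, hPz⟩
        · exact Or.inr ⟨P, hP, ⟨h, hxP⟩, hPz⟩)
      (by
        obtain ⟨w, hw⟩ := hne P₀ hP₀
        exact ⟨w, hS.subset hP₀ hw, P₀, hP₀, rfl, fun j _ => ⟨w, hw, rfl⟩⟩)
      (by
        obtain ⟨P, hP, hxP, hPy⟩ := hcov y hy
        exact ⟨y, hy, P, hP, ⟨fun h => hcon ⟨P, hP, h, hPy⟩, hxP⟩, hPy⟩)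
  refine hPc' (hPc ▸ (hS.eval_image_eq hpi hP hP' (hPc ▸ hx) hxP' (hPc ▸ hface) hPz hPz').symm)

lemma IsSubdivision.factorCells (hS : IsSubdivision S (univ.pi Q))
    (hpi : ∀ P ∈ S, P = univ.pi fun i => Function.eval i '' P)
    (hne : ∀ P ∈ S, P.Nonempty) (hQ : ∀ i, Convex ℝ (Q i)) (hQne : (univ.pi Q).Nonempty) (i : ι) :
    IsSubdivision (factorCells S i) (Q i) := by
  classical
  obtain ⟨y, hy⟩ := hQne
  have hQi : Function.eval i '' univ.pi Q = Q i := eval_image_univ_pi ⟨y, hy⟩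
  have hspan : ∀ P ∈ S, vectorSpan ℝ (Function.eval i '' P) = vectorSpan ℝ (Q i) := by
    intro P hP
    rw [vectorSpan_eval_image_eq (hS.vectorSpan_eq hP), hQi]
  have hface : ∀ c ∈ _root_.factorCells S i, ∀ c' ∈ _root_.factorCells S i, (c ∩ c').Nonempty →
      IsFaceOf c (c ∩ c') := by
    intro c hc c' hc' hn
    obtain ⟨P, hP, rfl, hPy⟩ := hS.exists_cell_over hpi hne hQ hc hy
    obtain ⟨P', hP', rfl, hPy'⟩ := hS.exists_cell_over hpi hne hQ hc' hy
    exact hS.isFaceOf_eval_inter hpi hP hP' hPy hPy' hn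
  have hproper : ∀ c ∈ _root_.factorCells S i, ∀ c' ∈ _root_.factorCells S i, c ≠ c' →
      (c ∩ c').Nonempty → c ∩ c' ≠ c := by
    intro c hc c' hc' hcc hn h
    have hF := hface c' hc' c hc (inter_comm c c' ▸ hn)
    rw [inter_comm, h] at hF
    obtain ⟨P, hP, rfl⟩ := mem_factorCells.1 hc
    obtain ⟨P', hP', rfl⟩ := mem_factorCells.1 hc'
    exact hcc (hF.eq_of_vectorSpan_eq (hn.mono inter_subset_left)
      ((hspan P hP).trans (hspan P' hP').symm))
  constructor
  · intro c hc
    obtain ⟨P, hP, rfl⟩ := mem_factorCells.1 hc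
    exact (hS.poly P hP).image (LinearMap.proj i)
  · intro c hc
    obtain ⟨P, hP, rfl⟩ := mem_factorCells.1 hc
    rw [pdim, pdim, hspan P hP]
  · intro c hc
    obtain ⟨P, hP, rfl⟩ := mem_factorCells.1 hc
    refine extremePoints_subset_of_pi (A := fun i => Function.eval i '' P) ?_ ?_ i
    · rw [← hpi P hP]
      exact (hS.poly P hP).isCompact.extremePoints_nonempty (hne P hP)
    · rw [← hpi P hP]
      exact hS.vertices_subset P hP
  · rw [← hQi, ← hS.cover, sUnion_eq_biUnion, sUnion_eq_biUnion, image_iUnion₂]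
    ext x
    simp [mem_factorCells]
  · intro c hc c' hc' hcc hn
    have hn' : (c' ∩ c).Nonempty := inter_comm c c' ▸ hn
    refine ⟨hface c hc c' hc' hn, hproper c hc c' hc' hcc hn, ?_, ?_⟩
    · rw [inter_comm]; exact hface c' hc' c hc hn'
    · rw [inter_comm]; exact hproper c' hc' c hc hcc.symm hn'

/-- A subdivision of a product of convex sets all of whose cells are products is the product of
the subdivisions of the factors. -/
lemma IsSubdivision.mem_iff_exists_factorCells (hS : IsSubdivision S (univ.pi Q))
    (hpi : ∀ P ∈ S, P = univ.pi fun i => Function.eval i '' P)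
    (hne : ∀ P ∈ S, P.Nonempty) (hQ : ∀ i, Convex ℝ (Q i)) {P : Set (∀ i, E i)} :
    P ∈ S ↔ ∃ c : ∀ i, Set (E i), (∀ i, c i ∈ _root_.factorCells S i) ∧ P = univ.pi c := by
  constructor
  · intro hP
    exact ⟨fun i => Function.eval i '' P, fun i => mem_factorCells.2 ⟨P, hP, rfl⟩, hpi P hP⟩
  rintro ⟨c, hc, rfl⟩
  have hgen : ∀ i, ∃ x ∈ c i, ∀ F, IsFaceOf (c i) F → x ∈ F → F = c i := by
    intro i
    obtain ⟨R, hR, hRc⟩ := mem_factorCells.1 (hc i)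
    rw [← hRc]
    exact ((hS.poly R hR).image (LinearMap.proj i)).exists_mem_forall_face_eq ((hne R hR).image _)
  choose x hx hface using hgen
  have hxQ : x ∈ univ.pi Q := by
    intro i _
    obtain ⟨R, hR, hRc⟩ := mem_factorCells.1 (hc i)
    obtain ⟨w, hw, hwx⟩ := hRc ▸ hx i
    exact hwx ▸ hS.subset hR hw i trivial
  obtain ⟨P, hP, hxP⟩ := hS.cover.symm ▸ hxQ
  have hfactor : ∀ i, c i = Function.eval i '' P := by
    intro i
    obtain ⟨R, hR, hRc, hRx⟩ := hS.exists_cell_over hpi hne hQ (hc i) hxQ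
    rw [← hRc]
    exact hS.eval_image_eq hpi hR hP (hRc ▸ hx i) ⟨x, hxP, rfl⟩ (hRc ▸ hface i) hRx
      fun j _ => ⟨x, hxP, rfl⟩
  rw [funext hfactor, ← hpi P hP]
  exact hP

end ProductSubdivisions

section MatroidBases

open Set

/-- If all bases of a matroid meet `X` in the same number of elements, then exchanging the parts
inside `X` of two bases yields a base. -/
lemma Matroid.IsBase.inter_union_sdiff {γ : Type*} [Finite γ] {M : Matroid γ} {X : Set γ} {r : ℕ}
    (hr : ∀ B, M.IsBase B → (B ∩ X).ncard = r) {B B' : Set γ}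
    (hB : M.IsBase B) (hB' : M.IsBase B') : M.IsBase (B' ∩ X ∪ B \ X) := by
  induction hn : ((B \ B') ∩ X).ncard generalizing B with
  | zero =>
    have hempty : (B \ B') ∩ X = ∅ := (ncard_eq_zero (toFinite _)).1 hn
    have hsub : B ∩ X ⊆ B' ∩ X := fun e he =>
      ⟨by_contra fun h => (hempty ▸ (⟨⟨he.1, h⟩, he.2⟩ : e ∈ (B \ B') ∩ X) : e ∈ (∅ : Set γ)), he.2⟩
    have heq := eq_of_subset_of_ncard_le hsub (by rw [hr B hB, hr B' hB']) (toFinite _)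
    rwa [← heq, Set.inter_union_sdiff]
  | succ n ih =>
    obtain ⟨e, ⟨heB, heB'⟩, heX⟩ : ((B \ B') ∩ X).Nonempty :=
      nonempty_of_ncard_ne_zero (by omega)
    obtain ⟨f, ⟨hfB', hfB⟩, hbase⟩ := hB.exchange hB' ⟨heB, heB'⟩
    have hfX : f ∈ X := by
      by_contra hfX
      have heq : insert f (B \ {e}) ∩ X = (B ∩ X) \ {e} := by
        ext a
        by_cases ha : a = f
        · subst ha; simp [hfX]
        · simp [ha]; tauto
      have h1 := hr _ hbase
      rw [heq, ← hr B hB] at h1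
      exact (ncard_sdiff_singleton_lt_of_mem (s := B ∩ X) ⟨heB, heX⟩ (toFinite _)).ne h1
    have hdiff : (insert f (B \ {e}) \ B') ∩ X = ((B \ B') ∩ X) \ {e} := by
      ext a
      by_cases ha : a = f
      · subst ha; simp [hfB']
      · simp [ha]; tauto
    have hout : insert f (B \ {e}) \ X = B \ X := by
      ext a
      by_cases ha : a = f
      · subst ha; simp [hfX]
      · by_cases hae : a = e
        · subst hae; simp [heX]
        · simp [ha, hae]
    have hstep := ih hbase (by
      rw [hdiff, ncard_sdiff_singleton_of_mem (s := (B \ B') ∩ X) ⟨⟨heB, heB'⟩, heX⟩, hn, Nat.add_sub_cancel])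
    rwa [hout] at hstep

/-- If all bases of a matroid meet each fibre of a sigma type in a fixed number of elements, then
gluing the fibres of arbitrary bases yields a base. -/
lemma Matroid.isBase_glue {ι : Type*} [Finite ι] {α : ι → Type*} [∀ i, Finite (α i)]
    {M : Matroid ((i : ι) × α i)} {r : ι → ℕ}
    (hr : ∀ B, M.IsBase B → ∀ i, (B ∩ {x | x.1 = i}).ncard = r i)
    {B : ι → Set ((i : ι) × α i)} (hB : ∀ i, M.IsBase (B i)) : M.IsBase {x | x ∈ B x.1} := by
  classical
  obtain ⟨B₀, hB₀⟩ := M.exists_isBase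
  have := Fintype.ofFinite ι
  have key : ∀ s : Finset ι, M.IsBase {x | (x.1 ∈ s ∧ x ∈ B x.1) ∨ (x.1 ∉ s ∧ x ∈ B₀)} := by
    intro s
    induction s using Finset.induction_on with
    | empty => simpa using hB₀
    | insert i s hi ih =>
      convert Matroid.IsBase.inter_union_sdiff (fun B' hB' => hr B' hB' i) ih (hB i) using 1
      ext x
      by_cases hx : x.1 = i
      · subst hx; simp
      · simp [hx]
  simpa using key Finset.univ

end MatroidBases

section MatroidPolytopes

open Set

lemma sum_eq_of_mem_mPolyG {β : Type*} [Fintype β] [DecidableEq β] {M : Matroid β}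
    {x : β → ℝ} (hx : x ∈ mPolyG M) {B : Set β} (hB : M.IsBase B) : ∑ a, x a = B.ncard := by
  let φ : (β → ℝ) →ₗ[ℝ] ℝ := ∑ a, LinearMap.proj a
  have hφ : ∀ y, φ y = ∑ a, y a := fun y => by simp [φ]
  rw [← hφ]
  refine convexHull_min (t := {y | φ y = B.ncard}) ?_ (convex_hyperplane φ.isLinear _) hx
  rintro _ ⟨B', hB', rfl⟩
  simp [hφ, hB.ncard_eq_ncard_of_isBase hB']

lemma mPolyG_nonempty {β : Type*} [Fintype β] [DecidableEq β] (M : Matroid β) :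
    (mPolyG M).Nonempty := by
  obtain ⟨B, hB⟩ := M.exists_isBase
  exact ⟨_, subset_convexHull ℝ _ ⟨B.toFinite.toFinset, by simpa using hB, rfl⟩⟩

variable {ι : Type*} [Fintype ι] {α : ι → Type*} [∀ i, Fintype (α i)] [∀ i, DecidableEq (α i)]

/-- The polytope of a direct sum is the product of the polytopes of the summands. -/
lemma convexHull_directSum_bases (M : ∀ i, Matroid (α i)) :
    convexHull ℝ {x : (i : ι) → α i → ℝ | ∃ B : (i : ι) → Finset (α i),
      (∀ i, (M i).IsBase ↑(B i)) ∧ x = fun i a => if a ∈ B i then (1 : ℝ) else 0}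
      = univ.pi fun i => mPolyG (M i) := by
  unfold mPolyG
  rw [← convexHull_pi]
  congr 1
  ext x
  simp only [mem_ofPred_eq, mem_univ_pi]
  constructor
  · rintro ⟨B, hB, rfl⟩ i
    exact ⟨B i, hB i, rfl⟩
  · intro h
    choose B hB hx using h
    exact ⟨B, hB, funext hx⟩

/-- A matroid polytope contained in the polytope of a direct sum is the product of its
projections. -/
lemma eq_pi_eval_image_of_subset [DecidableEq ι] (M : ∀ i, Matroid (α i))
    (M' : Matroid ((i : ι) × α i)) {P : Set ((i : ι) → α i → ℝ)}
    (hP : P = convexHull ℝ {x | ∃ B : Finset ((i : ι) × α i), M'.IsBase ↑B ∧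
        x = fun i a => if (⟨i, a⟩ : (i : ι) × α i) ∈ B then (1 : ℝ) else 0})
    (hsub : P ⊆ univ.pi fun i => mPolyG (M i)) :
    P = univ.pi fun i => Function.eval i '' P := by
  set V : Set ((i : ι) → α i → ℝ) := {x | ∃ B : Finset ((i : ι) × α i), M'.IsBase ↑B ∧
        x = fun i a => if (⟨i, a⟩ : (i : ι) × α i) ∈ B then (1 : ℝ) else 0} with hV
  choose B₀ hB₀ using fun i => (M i).exists_isBase
  have hr : ∀ B, M'.IsBase B → ∀ i, (B ∩ {x | x.1 = i}).ncard = (B₀ i).ncard := by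
    intro B hB i
    obtain ⟨B, rfl⟩ := B.toFinite.exists_finset_coe
    have hmem := hsub (hP ▸ subset_convexHull ℝ V ⟨B, hB, rfl⟩) i trivial
    have hsum := sum_eq_of_mem_mPolyG hmem (hB₀ i)
    have himg : (↑B ∩ {x : (i : ι) × α i | x.1 = i})
        = ↑((Finset.univ.filter fun a : α i => (⟨i, a⟩ : (i : ι) × α i) ∈ B).map
          (Function.Embedding.sigmaMk i)) := by
      ext ⟨j, a⟩
      by_cases hj : j = i
      · subst hj; simp
      · simp [hj, Ne.symm hj]
    rw [himg, ncard_coe_finset, Finset.card_map]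
    simp only [Finset.sum_boole] at hsum
    exact_mod_cast hsum
  have hVpi : V = univ.pi fun i => Function.eval i '' V := by
    refine Subset.antisymm (fun x hx i _ => ⟨x, hx, rfl⟩) fun x hx => ?_
    choose y hyV hyx using fun i => hx i trivial
    choose B hB hy using hyV
    have hglue := Matroid.isBase_glue hr hB
    refine ⟨Finset.univ.filter fun z => z ∈ B z.1, by simpa using hglue, ?_⟩
    ext i a
    rw [← hyx i]
    simp [hy i]
  have himage : ∀ i, Function.eval i '' P = convexHull ℝ (Function.eval i '' V) := by
    intro i
    rw [hP]
    exact (LinearMap.proj i : ((i : ι) → α i → ℝ) →ₗ[ℝ] (α i → ℝ)).image_convexHull V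
  rw [funext himage, ← convexHull_pi, ← hVpi, hP]

end MatroidPolytopes

/-- Let `M₁, …, M_k` be matroids on pairwise disjoint ground sets and let
`S` be a matroid polytope subdivision of the matroid polytope of their direct sum
`Q(M₁ ⊕ ⋯ ⊕ M_k)`.  Under the identification `Q(M₁ ⊕ ⋯ ⊕ M_k) ≅ Q(M₁) × ⋯ × Q(M_k)`
(realized here by working in the product space `∏ i, ℝ^{α i}`, in which the indicator
vector of a union of bases corresponds to the tuple of indicator vectors), one has
`S = S₁ × ⋯ × S_k` where each `Sᵢ` is a subdivision of `Q(Mᵢ)`. -/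
theorem matroid_subdivision_of_directSum {k : ℕ} (hk : 0 < k)
    (α : Fin k → Type*) [∀ i, Fintype (α i)] [∀ i, DecidableEq (α i)]
    (Mi : ∀ i, Matroid (α i)) (hEi : ∀ i, (Mi i).E = Set.univ)
    (Q : Set ((i : Fin k) → α i → ℝ))
    (hQ : Q = convexHull ℝ {x | ∃ B : (i : Fin k) → Finset (α i),
      (∀ i, (Mi i).IsBase ↑(B i)) ∧ x = fun i a => if a ∈ B i then (1 : ℝ) else 0})
    (S : Finset (Set ((i : Fin k) → α i → ℝ)))
    (hS : IsSubdivision S Q)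
    (hcells : ∀ P ∈ S, ∃ M' : Matroid ((i : Fin k) × α i),
      P = convexHull ℝ {x | ∃ B : Finset ((i : Fin k) × α i), M'.IsBase ↑B ∧
        x = fun i a => if (⟨i, a⟩ : (i : Fin k) × α i) ∈ B then (1 : ℝ) else 0}) :
    ∃ Si : (i : Fin k) → Finset (Set (α i → ℝ)),
      (∀ i, IsSubdivision (Si i) (mPolyG (Mi i))) ∧
      (↑S : Set (Set ((i : Fin k) → α i → ℝ))) =
        {P | ∃ c : (i : Fin k) → Set (α i → ℝ),
          (∀ i, c i ∈ Si i) ∧ P = {x | ∀ i, x i ∈ c i}} := by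
  rw [convexHull_directSum_bases] at hQ
  subst hQ
  have hpi : ∀ P ∈ S, P = Set.univ.pi fun i => Function.eval i '' P := by
    intro P hP
    obtain ⟨M', hM'⟩ := hcells P hP
    exact eq_pi_eval_image_of_subset Mi M' hM' (hS.subset hP)
  have hne : ∀ P ∈ S, P.Nonempty := by
    intro P hP
    obtain ⟨M', rfl⟩ := hcells P hP
    obtain ⟨B, hB⟩ := M'.exists_isBase
    exact ⟨_, subset_convexHull ℝ _ ⟨B.toFinite.toFinset, by simpa using hB, rfl⟩⟩
  have hconv : ∀ i, Convex ℝ (mPolyG (Mi i)) := fun i => convex_convexHull ℝ _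
  refine ⟨factorCells S, hS.factorCells hpi hne hconv
    (Set.univ_pi_nonempty_iff.2 fun i => mPolyG_nonempty (Mi i)), ?_⟩
  ext P
  rw [Finset.mem_coe, hS.mem_iff_exists_factorCells hpi hne hconv]
  simp [Set.pi]
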